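/- Let 𝐬 = (s₁, …, s_l) and 𝐬' = (s'₁, …, s'_l) be ladders of length l with s_k ▷ s'_k for all 1 ≤ k ≤ l, and for each k let p_k ∈ ℙ_{s'_k} be an MY path with c_{p_k}^− = {s_k}. Then (p₁, …, p_l) ∈ ℙ_{𝐬'}. -/

import Mathlib

namespace SnakePaper

/-- `zle a b` : `b - a` is a nonnegative integer (the integrality order `a ≤ b`). -/
def zle (a b : ℚ) : Prop := ∃ n : ℤ, 0 ≤ n ∧ b - a = (n : ℚ)

/-- `zlt a b` : `b - a` is a positive integer (the integrality order `a < b`). -/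
def zlt (a b : ℚ) : Prop := ∃ n : ℤ, 0 < n ∧ b - a = (n : ℚ)

/-- `s = (i, j)` is an `N`-segment: `2i ∈ ℤ`, `j - i ∈ ℤ` and `0 ≤ j - i ≤ N + 1`. -/
def IsSeg (N : ℕ) (s : ℚ × ℚ) : Prop :=
  (∃ m : ℤ, 2 * s.1 = (m : ℚ)) ∧
  ∃ n : ℤ, s.2 - s.1 = (n : ℚ) ∧ 0 ≤ n ∧ (n : ℚ) ≤ (N : ℚ) + 1

/-- `s = (i, j)` is a proper `N`-segment: `2i ∈ ℤ`, `j - i ∈ ℤ` and `0 < j - i < N + 1`. -/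
def IsProperSeg (N : ℕ) (s : ℚ × ℚ) : Prop :=
  (∃ m : ℤ, 2 * s.1 = (m : ℚ)) ∧
  ∃ n : ℤ, s.2 - s.1 = (n : ℚ) ∧ 0 < n ∧ (n : ℚ) < (N : ℚ) + 1

/-- `supp [i,j] = j - i`. -/
def supp (s : ℚ × ℚ) : ℚ := s.2 - s.1

/-- `spar [i,j] = i + j`. -/
def spar (s : ℚ × ℚ) : ℚ := s.1 + s.2

/-- Right dual `s* = [j - h, i]`, where `h = N + 1`. -/
def dual (N : ℕ) (s : ℚ × ℚ) : ℚ × ℚ := (s.2 - ((N : ℚ) + 1), s.1)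

/-- Left dual `*s = [j, i + h]`, where `h = N + 1`. -/
def ldual (N : ℕ) (s : ℚ × ℚ) : ℚ × ℚ := (s.2, s.1 + ((N : ℚ) + 1))

/-- `1 + s = [i + 1, j + 1]`. -/
def shift (s : ℚ × ℚ) : ℚ × ℚ := (s.1 + 1, s.2 + 1)

/-- `Covers N s₂ s₁` : `s₂ ▷ s₁`, i.e. `i₁ < i₂ ≤ j₁ < j₂ ≤ h + i₁` (integrality order). -/
def Covers (N : ℕ) (s₂ s₁ : ℚ × ℚ) : Prop :=
  zlt s₁.1 s₂.1 ∧ zle s₂.1 s₁.2 ∧ zlt s₁.2 s₂.2 ∧ zle s₂.2 (((N : ℚ) + 1) + s₁.1)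

/-- For `s₂ ▷ s₁`, the intersection `s₁ ∩ s₂ = [i₂, j₁]`. -/
def seginter (s₁ s₂ : ℚ × ℚ) : ℚ × ℚ := (s₂.1, s₁.2)

/-- For `s₂ ▷ s₁`, the union `s₁ ∪ s₂ = [i₁, j₂]`. -/
def segunion (s₁ s₂ : ℚ × ℚ) : ℚ × ℚ := (s₁.1, s₂.2)

/-- `(s 0, …, s (l-1))` is a ladder of length `l`. -/
def IsLadder (N l : ℕ) (s : ℕ → ℚ × ℚ) : Prop :=
  (∀ k, k < l → IsSeg N (s k)) ∧
  ∀ k m, k < m → m < l → zlt (s k).1 (s m).1 ∧ zlt (s k).2 (s m).2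

/-- `(s₁, s₂)` is a ladder of length 2. -/
def IsLadder2 (N : ℕ) (s₁ s₂ : ℚ × ℚ) : Prop :=
  IsSeg N s₁ ∧ IsSeg N s₂ ∧ zlt s₁.1 s₂.1 ∧ zlt s₁.2 s₂.2

/-- Componentwise covering of two length-`l` tuples: `𝐬 ▷ 𝐬'`. -/
def CoversMulti (N l : ℕ) (s s' : ℕ → ℚ × ℚ) : Prop :=
  ∀ m, m < l → Covers N (s m) (s' m)

/-- `𝐬 ▷_p 𝐬'` for length-`l` tuples: `𝐬(0, l−k) ▷ 𝐬'(k, l)` for all `0 ≤ k ≤ p`. -/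
def CoversP (N l p : ℕ) (s s' : ℕ → ℚ × ℚ) : Prop :=
  ∀ k, k ≤ p → ∀ m, m + k < l → Covers N (s m) (s' (m + k))

/-- `p` is an MY path for the segment `s` (`h = N + 1`; only values on `{0, …, h}` matter). -/
def IsMYPath (N : ℕ) (s : ℚ × ℚ) (p : ℕ → ℤ) : Prop :=
  (∀ k, k < N + 1 → p (k + 1) = p k + 1 ∨ p (k + 1) = p k - 1) ∧
  (p 0 : ℚ) = 2 * s.2 ∧ (p (N + 1) : ℚ) = ((N : ℚ) + 1) + 2 * s.1

/-- `s_{p,k} = [(p(k) - k)/2, (p(k) + k)/2]`. -/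
def pathSeg (p : ℕ → ℤ) (k : ℕ) : ℚ × ℚ :=
  (((p k : ℚ) - (k : ℚ)) / 2, ((p k : ℚ) + (k : ℚ)) / 2)

/-- `c_p^-` : segments at the local maxima of `p` in `[1, N]`. -/
def cMinus (N : ℕ) (p : ℕ → ℤ) : Set (ℚ × ℚ) :=
  {t | ∃ k, 1 ≤ k ∧ k ≤ N ∧ t = pathSeg p k ∧ p (k - 1) = p k - 1 ∧ p (k + 1) = p k - 1}

/-- `c_p^+` : segments at the local minima of `p` in `[1, N]`. -/
def cPlus (N : ℕ) (p : ℕ → ℤ) : Set (ℚ × ℚ) :=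
  {t | ∃ k, 1 ≤ k ∧ k ≤ N ∧ t = pathSeg p k ∧ p (k - 1) = p k + 1 ∧ p (k + 1) = p k + 1}

/-- `c_s^- = ⋃_{p ∈ ℙ_s} c_p^-`. -/
def cSegMinus (N : ℕ) (s : ℚ × ℚ) : Set (ℚ × ℚ) :=
  {t | ∃ p, IsMYPath N s p ∧ t ∈ cMinus N p}

/-- `c_s^+ = ⋃_{p ∈ ℙ_s} c_p^+`. -/
def cSegPlus (N : ℕ) (s : ℚ × ℚ) : Set (ℚ × ℚ) :=
  {t | ∃ p, IsMYPath N s p ∧ t ∈ cPlus N p}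

/-- `(p 0, …, p (l-1)) ∈ ℙ_𝐬` for the length-`l` tuple `𝐬`. -/
def IsPathTuple (N l : ℕ) (s : ℕ → ℚ × ℚ) (p : ℕ → ℕ → ℤ) : Prop :=
  (∀ m, m < l → IsMYPath N (s m) (p m)) ∧
  ∀ m n, m < n → n < l → ∀ k, k ≤ N + 1 → p m k < p n k

/-- The highest path `p_s(k) = spar(s) + |k - supp(s)|` (rational-valued formula). -/
def highestPath (s : ℚ × ℚ) (k : ℚ) : ℚ := spar s + |k - supp s|

/-- The lowest path `p_s^*(k) = spar(s) + h - |k - (h - supp(s))|` (rational-valued formula). -/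
def lowestPath (N : ℕ) (s : ℚ × ℚ) (k : ℚ) : ℚ :=
  spar s + ((N : ℚ) + 1) - |k - (((N : ℚ) + 1) - supp s)|

/-- `Small N s₁' t` : `spar(t) ≤ spar(*s₁') - |supp(t) - supp(*s₁')|` (integrality order). -/
def Small (N : ℕ) (s₁' t : ℚ × ℚ) : Prop :=
  zle (spar t) (spar (ldual N s₁') - |supp t - supp (ldual N s₁')|)

/-- `(s₁, s₂)` and `(s₁', s₂')` are ladders and `(s₁, s₂) ▷₁ (s₁', s₂')`. -/
def Pair1Cover (N : ℕ) (s₁ s₁' s₂ s₂' : ℚ × ℚ) : Prop :=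
  IsLadder2 N s₁ s₂ ∧ IsLadder2 N s₁' s₂' ∧
  Covers N s₁ s₁' ∧ Covers N s₂ s₂' ∧ Covers N s₁ s₂'

/-!
An MY path climbs from any point in unit steps until it meets a local maximum or an end of the
interval, so it is the upper envelope of the downward cones `f c - |k - c|` with apex `c` at an end
or at a local maximum. Any other MY path `g`, having unit steps, lies above the cone below each of
its points. Hence `f < g` everywhere as soon as `f < g` at the two ends and at the local maxima
of `f`. For points `(k, f k)` the coordinates `(f k ∓ k) / 2` of `pathSeg` are those along the
sides of a cone, so `pathSeg f c` being smaller than some `pathSeg g b` in both coordinates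
already gives `f c < g c`.
-/

section UnitSteps

variable {H : ℕ} {f g : ℕ → ℤ}

/-- An interior strict local maximum of a `±1`-step path on `{0, …, H}`. The bounds on `k` are
part of the definition, so that the truncated subtraction `k - 1` is never met at `k = 0`. -/
def IsPeak (H : ℕ) (f : ℕ → ℤ) (k : ℕ) : Prop :=
  0 < k ∧ k < H ∧ f (k - 1) = f k - 1 ∧ f (k + 1) = f k - 1

lemma abs_sub_le_of_abs_step_le_one (hf : ∀ k < H, |f (k + 1) - f k| ≤ 1) {a b : ℕ}
    (ha : a ≤ H) (hb : b ≤ H) : |f a - f b| ≤ |(a : ℤ) - b| := by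
  wlog hab : a ≤ b generalizing a b
  · rw [abs_sub_comm, abs_sub_comm (a : ℤ)]
    exact this hb ha (le_of_not_ge hab)
  induction b, hab using Nat.le_induction with
  | base => simp
  | succ n han ih =>
    calc
      |f a - f (n + 1)| ≤ |f a - f n| + |f (n + 1) - f n| := by
        rw [abs_sub_comm (f (n + 1))]
        exact abs_sub_le _ _ _
      _ ≤ |(a : ℤ) - n| + 1 := add_le_add (ih (by lia)) (hf n hb)
      _ = |(a : ℤ) - ↑(n + 1)| := by grind

lemma exists_adjacent_eq_add_one (hf : ∀ k < H, |f (k + 1) - f k| = 1) {c : ℕ} (hc : c ≤ H)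
    (h₀ : c ≠ 0) (hH : c ≠ H) (hpeak : ¬ IsPeak H f c) :
    ∃ c' ≤ H, |(c' : ℤ) - c| = 1 ∧ f c' = f c + 1 := by
  have hright := hf c (by lia)
  have hleft := hf (c - 1) (by lia)
  rw [Nat.sub_add_cancel (by lia)] at hleft
  by_cases hup : f (c + 1) = f c + 1
  · exact ⟨c + 1, by lia, by simp, hup⟩
  · exact ⟨c - 1, by lia, by grind, by grind [IsPeak]⟩

lemma exists_apex_eq_sub_abs (hf : ∀ k < H, |f (k + 1) - f k| = 1) {k : ℕ} (hk : k ≤ H) :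
    ∃ c ≤ H, (c = 0 ∨ c = H ∨ IsPeak H f c) ∧ f k = f c - |(c : ℤ) - k| := by
  -- The apex is the highest point reachable from `k` by climbing at every step.
  let climbs := {c ∈ Finset.range (H + 1) | f c = f k + |(c : ℤ) - k|}
  have mem_climbs {c : ℕ} : c ∈ climbs ↔ c ≤ H ∧ f c = f k + |(c : ℤ) - k| := by
    simp [climbs]
  obtain ⟨c, hc, hmax⟩ := climbs.exists_max_image f ⟨k, mem_climbs.2 ⟨hk, by simp⟩⟩
  obtain ⟨hcH, hfc⟩ := mem_climbs.1 hc
  refine ⟨c, hcH, ?_, eq_sub_of_add_eq hfc.symm⟩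
  by_contra! ⟨h₀, hH, hpeak⟩
  obtain ⟨c', hc'H, hadj, hup⟩ := exists_adjacent_eq_add_one hf hcH h₀ hH hpeak
  have hlower : f c' - f k ≤ |(c' : ℤ) - k| :=
    (le_abs_self _).trans (abs_sub_le_of_abs_step_le_one (fun i hi => (hf i hi).le) hc'H hk)
  have hupper : |(c' : ℤ) - k| ≤ |(c' : ℤ) - c| + |(c : ℤ) - k| := abs_sub_le _ _ _
  have hc' : c' ∈ climbs := mem_climbs.2 ⟨hc'H, by lia⟩
  exact absurd (hmax c' hc') (by lia)

lemma lt_of_lt_at_peaks (hf : ∀ k < H, |f (k + 1) - f k| = 1)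
    (hg : ∀ k < H, |g (k + 1) - g k| ≤ 1) (h₀ : f 0 < g 0) (hH : f H < g H)
    (hpeak : ∀ c, IsPeak H f c → f c < g c) {k : ℕ} (hk : k ≤ H) : f k < g k := by
  obtain ⟨c, hcH, hc, hfk⟩ := exists_apex_eq_sub_abs hf hk
  have hfg : f c < g c := by
    rcases hc with rfl | rfl | hc
    exacts [h₀, hH, hpeak c hc]
  calc
    f k = f c - |(c : ℤ) - k| := hfk
    _ < g c - |(c : ℤ) - k| := by gcongr
    _ ≤ g k := sub_le_comm.1 ((le_abs_self _).trans (abs_sub_le_of_abs_step_le_one hg hcH hk))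

end UnitSteps

lemma zlt.lt {a b : ℚ} (h : zlt a b) : a < b := by
  obtain ⟨n, hn, hab⟩ := h
  exact sub_pos.1 (hab ▸ Int.cast_pos.2 hn)

section MYPaths

variable {N : ℕ} {s t : ℚ × ℚ} {f g : ℕ → ℤ}

lemma pathSeg_lt_pathSeg_iff {a b : ℕ} :
    ((pathSeg f a).1 < (pathSeg g b).1 ∧ (pathSeg f a).2 < (pathSeg g b).2) ↔
      |(b : ℤ) - a| < g b - f a := by
  have hfst : (pathSeg f a).1 < (pathSeg g b).1 ↔ f a - a < g b - b := by
    rw [pathSeg, pathSeg, div_lt_div_iff_of_pos_right two_pos]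
    norm_cast
  have hsnd : (pathSeg f a).2 < (pathSeg g b).2 ↔ f a + a < g b + b := by
    rw [pathSeg, pathSeg, div_lt_div_iff_of_pos_right two_pos]
    norm_cast
  rw [hfst, hsnd, abs_lt]
  lia

lemma mem_cMinus_iff : t ∈ cMinus N f ↔ ∃ k, IsPeak (N + 1) f k ∧ t = pathSeg f k := by
  simp only [cMinus, IsPeak, Set.mem_ofPred_eq, Nat.lt_succ_iff, Nat.succ_le_iff]
  grind

lemma IsMYPath.abs_step (hf : IsMYPath N s f) : ∀ k < N + 1, |f (k + 1) - f k| = 1 := by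
  intro k hk
  have hstep := hf.1 k hk
  grind

lemma IsMYPath.apply_zero_lt_iff (hf : IsMYPath N s f) (hg : IsMYPath N t g) :
    f 0 < g 0 ↔ s.2 < t.2 := by
  rw [← Int.cast_lt (R := ℚ), hf.2.1, hg.2.1, mul_lt_mul_iff_right₀ two_pos]

lemma IsMYPath.apply_last_lt_iff (hf : IsMYPath N s f) (hg : IsMYPath N t g) :
    f (N + 1) < g (N + 1) ↔ s.1 < t.1 := by
  rw [← Int.cast_lt (R := ℚ), hf.2.2, hg.2.2, add_lt_add_iff_left, mul_lt_mul_iff_right₀ two_pos]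

lemma IsMYPath.lt_of_pathSeg_lt_pathSeg (hg : IsMYPath N t g) {a b : ℕ} (ha : a ≤ N + 1)
    (hb : b ≤ N + 1)
    (hab : (pathSeg f a).1 < (pathSeg g b).1 ∧ (pathSeg f a).2 < (pathSeg g b).2) :
    f a < g a := by
  have hdist : |(b : ℤ) - a| < g b - f a := pathSeg_lt_pathSeg_iff.1 hab
  have hlip : g b - g a ≤ |(b : ℤ) - a| :=
    (le_abs_self _).trans (abs_sub_le_of_abs_step_le_one (fun k hk => (hg.abs_step k hk).le) hb ha)
  lia

lemma IsMYPath.lt_of_cMinus_lt (hf : IsMYPath N s f) (hg : IsMYPath N t g)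
    (hst₁ : s.1 < t.1) (hst₂ : s.2 < t.2)
    (hc : ∀ u ∈ cMinus N f, ∃ b ≤ N + 1, u.1 < (pathSeg g b).1 ∧ u.2 < (pathSeg g b).2)
    {k : ℕ} (hk : k ≤ N + 1) : f k < g k := by
  refine lt_of_lt_at_peaks hf.abs_step (fun i hi => (hg.abs_step i hi).le)
    ((hf.apply_zero_lt_iff hg).2 hst₂) ((hf.apply_last_lt_iff hg).2 hst₁) (fun a ha => ?_) hk
  obtain ⟨b, hb, hab⟩ := hc (pathSeg f a) (mem_cMinus_iff.2 ⟨a, ha, rfl⟩)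
  exact hg.lt_of_pathSeg_lt_pathSeg ha.2.1.le hb hab

end MYPaths

theorem cover_paths_tuple_general (N l : ℕ) (s : ℕ → ℚ × ℚ) (hs : IsLadder N l s)
    (p : ℕ → ℕ → ℤ) (hp : ∀ k, k < l → IsMYPath N (s k) (p k))
    (hc : ∀ m n, m < n → n < l → ∀ t ∈ cMinus N (p m),
      ∃ b ≤ N + 1, t.1 < (pathSeg (p n) b).1 ∧ t.2 < (pathSeg (p n) b).2) :
    IsPathTuple N l s p := by
  refine ⟨hp, fun m n hmn hn k hk => ?_⟩
  obtain ⟨hs₁, hs₂⟩ := hs.2 m n hmn hn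
  exact (hp m (hmn.trans hn)).lt_of_cMinus_lt (hp n hn) hs₁.lt hs₂.lt (hc m n hmn hn) hk

/-- If `𝐬, 𝐬'` are ladders of length `l` with `s_k ▷ s'_k` for all `k` and
`p_k ∈ ℙ_{s'_k}` satisfies `c_{p_k}^- = {s_k}`, then `(p₁, …, p_l) ∈ ℙ_{𝐬'}`. -/
theorem cover_paths_tuple (N : ℕ) (hN : 1 ≤ N) (l : ℕ) (s s' : ℕ → ℚ × ℚ)
    (hs : IsLadder N l s) (hs' : IsLadder N l s')
    (hcov : ∀ k, k < l → Covers N (s k) (s' k))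
    (p : ℕ → ℕ → ℤ)
    (hp : ∀ k, k < l → IsMYPath N (s' k) (p k) ∧ cMinus N (p k) = {s k}) :
    IsPathTuple N l s' p := by
  refine cover_paths_tuple_general N l s' hs' p (fun k hk => (hp k hk).1) ?_
  intro m n hmn hn t ht
  obtain rfl : t = s m := (hp m (hmn.trans hn)).2.subset ht
  obtain ⟨b, hb, hsn⟩ := mem_cMinus_iff.1 ((hp n hn).2 ▸ Set.mem_singleton (s n))
  exact ⟨b, hb.2.1.le, hsn ▸ (hs.2 m n hmn hn).1.lt, hsn ▸ (hs.2 m n hmn hn).2.lt⟩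

end SnakePaper
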